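/- Let H, K ∈ ℂ^{n×n} be matrices, L = -iH + K, and let Π ∈ ℂ^{n×n} be any matrix. Let F be an M×M complex matrix and l, r ∈ ℂ^M satisfy l† Fᵏ r = 1 for all integers k ≥ 0. Then for every integer k ≥ 0 and every x₀ ∈ ℂⁿ, (l† ⊗ I_n) · [ (I_M ⊗ Π)(I_M ⊗ (−iH) + F ⊗ K) ]ᵏ · (r ⊗ x₀) = (ΠL)ᵏ x₀. (Each term in the expansion has the form Fᵐ r ⊗ 𝒜_{k,m} x₀ where 𝒜_{k,m} is a product of m factors ΠK and k−m factors −iΠH, and the moment condition collapses the ancilla factor to 1.) -/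

import Mathlib

/-!
Write `A = Π(-iH)` and `B = ΠK`, so the dilated generator is `G = I ⊗ A + F ⊗ B`. On a product
vector, `G (Fᵐ r ⊗ x) = Fᵐ r ⊗ A x + Fᵐ⁺¹ r ⊗ B x`. Hence, by induction on `k` for all `m` and `x`
simultaneously, `(l† ⊗ I) Gᵏ (Fᵐ r ⊗ x) = (A + B)ᵏ x`: the moment condition makes the base case
independent of `m`, and the two summands recombine in the inductive step
(`collapse_pow_mulVec`). The theorem is the case `m = 0`.
-/

open Matrix Kronecker

/-- The product vector `u ⊗ x`. -/
def tensorVec {n M : ℕ} (u : Fin M → ℂ) (x : Fin n → ℂ) : Fin M × Fin n → ℂ :=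
  fun p => u p.1 * x p.2

/-- The contraction `(l† ⊗ I) v` of the ancilla factor against `l`. -/
def collapse {n M : ℕ} (l : Fin M → ℂ) (v : Fin M × Fin n → ℂ) : Fin n → ℂ :=
  fun j => ∑ i, star (l i) * v (i, j)

lemma collapse_add {n M : ℕ} (l : Fin M → ℂ) (v w : Fin M × Fin n → ℂ) :
    collapse l (v + w) = collapse l v + collapse l w := by
  ext j
  simp [collapse, mul_add, Finset.sum_add_distrib]

lemma collapse_tensorVec {n M : ℕ} (l u : Fin M → ℂ) (x : Fin n → ℂ) :
    collapse l (tensorVec u x) = (star l ⬝ᵥ u) • x := by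
  ext j
  simp [collapse, tensorVec, dotProduct, Finset.sum_mul, mul_assoc]

lemma kronecker_mulVec_tensorVec {n M : ℕ} (C : Matrix (Fin M) (Fin M) ℂ)
    (D : Matrix (Fin n) (Fin n) ℂ) (u : Fin M → ℂ) (x : Fin n → ℂ) :
    (C ⊗ₖ D) *ᵥ tensorVec u x = tensorVec (C *ᵥ u) (D *ᵥ x) := by
  ext ⟨i, j⟩
  simp only [tensorVec, mulVec, dotProduct, kroneckerMap_apply, Fintype.sum_prod_type,
    Finset.sum_mul_sum]
  refine Finset.sum_congr rfl fun a _ => Finset.sum_congr rfl fun b _ => ?_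
  ring

/-- The theorem for a general starting vector `Fᵐ r ⊗ x`; quantifying over `m` is what makes the
induction on `k` go through, since one factor of `G` may raise `m` by one. -/
lemma collapse_pow_mulVec {n M : ℕ} (A B : Matrix (Fin n) (Fin n) ℂ)
    (F : Matrix (Fin M) (Fin M) ℂ) (l r : Fin M → ℂ)
    (hmom : ∀ k : ℕ, star l ⬝ᵥ ((F ^ k) *ᵥ r) = 1) (k : ℕ) :
    ∀ (m : ℕ) (x : Fin n → ℂ),
      collapse l ((((1 : Matrix (Fin M) (Fin M) ℂ) ⊗ₖ A + F ⊗ₖ B) ^ k) *ᵥ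
        tensorVec ((F ^ m) *ᵥ r) x) = ((A + B) ^ k) *ᵥ x := by
  induction k with
  | zero =>
    intro m x
    simp [collapse_tensorVec, hmom]
  | succ k ih =>
    intro m x
    rw [pow_succ, ← mulVec_mulVec, add_mulVec, kronecker_mulVec_tensorVec,
      kronecker_mulVec_tensorVec, one_mulVec, mulVec_mulVec, ← pow_succ', mulVec_add,
      collapse_add, ih, ih, ← mulVec_add, ← add_mulVec, mulVec_mulVec, ← pow_succ]

/-- **Key algebraic lemma of the constrained moment dilation.** For any matrix `Π`, the
projection `(l† ⊗ I)` maps each power of the dilated projected generator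
`(I ⊗ Π)(I ⊗ (−iH) + F ⊗ K)` applied to `r ⊗ x₀` back to the corresponding power
`(Π L)ᵏ x₀` of the physical projected generator, where `L = −iH + K`. -/
theorem moment_dilation_power_collapse {n M : ℕ}
    (H K : Matrix (Fin n) (Fin n) ℂ)
    (L : Matrix (Fin n) (Fin n) ℂ)
    (hL : L = (-Complex.I) • H + K)
    (Prj : Matrix (Fin n) (Fin n) ℂ)
    (F : Matrix (Fin M) (Fin M) ℂ)
    (l r : Fin M → ℂ)
    (hmom : ∀ k : ℕ, star l ⬝ᵥ ((F ^ k) *ᵥ r) = 1)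
    (k : ℕ) (x₀ : Fin n → ℂ) :
    (fun j : Fin n => ∑ i : Fin M,
        star (l i) *
          (((((1 : Matrix (Fin M) (Fin M) ℂ) ⊗ₖ Prj) *
              ((1 : Matrix (Fin M) (Fin M) ℂ) ⊗ₖ ((-Complex.I) • H) + F ⊗ₖ K)) ^ k) *ᵥ
            (fun p : Fin M × Fin n => r p.1 * x₀ p.2)) (i, j))
      = ((Prj * L) ^ k) *ᵥ x₀ := by
  have h := collapse_pow_mulVec (Prj * ((-Complex.I) • H)) (Prj * K) F l r hmom k 0 x₀
  have hG : ((1 : Matrix (Fin M) (Fin M) ℂ) ⊗ₖ Prj) *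
      ((1 : Matrix (Fin M) (Fin M) ℂ) ⊗ₖ ((-Complex.I) • H) + F ⊗ₖ K) =
      (1 : Matrix (Fin M) (Fin M) ℂ) ⊗ₖ (Prj * ((-Complex.I) • H)) + F ⊗ₖ (Prj * K) := by
    rw [mul_add, ← mul_kronecker_mul, ← mul_kronecker_mul, one_mul, one_mul]
  rw [pow_zero, one_mulVec, ← mul_add, ← hL] at h
  rw [hG]
  exact h
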